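/- arXiv:2412.05942 — 2 statements merged into one kernel-verified Lean document; each statement's English description precedes it below -/
import Mathlib

section
/- Let n, M ≥ 1 be integers and let θ be an n×n matrix with nonnegative real entries such that ∏_{i} θ(i,σ(i)) > 0 for at least one permutation σ ∈ S_n, and let p_θ(σ) = (∏_i θ(i,σ(i)))/perm(θ) for σ ∈ S_n. Then perm(θ)/perm_{B,M}(θ) = ( Σ_{(σ_1,…,σ_M) ∈ (S_n)^M} (∏_{m=1}^M p_θ(σ_m)) · C_{B,M,n}(k)/C_{M,n}(k) )^{−1/M}, where k = Σ_{m=1}^M P_{σ_m} ∈ K(M,n) (note C_{M,n}(k) ≥ 1 for such k, so the ratio is well defined) and perm_{B,M}(θ) = ⟨perm(θ↑P_M)⟩^{1/M}. -/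
open scoped BigOperators

noncomputable section

/-- The permanent of a real square matrix: `perm(A) = Σ_{σ} ∏_i A(i, σ(i))`. -/
def perm' {α : Type*} [Fintype α] [DecidableEq α] (A : Matrix α α ℝ) : ℝ :=
  ∑ σ : Equiv.Perm α, ∏ i, A i (σ i)

/-- The permutation matrix `P_σ` with entries `P_σ(i,j) = 1` iff `σ(i) = j`. -/
def permMat {n : ℕ} (σ : Equiv.Perm (Fin n)) : Matrix (Fin n) (Fin n) ℕ :=
  Matrix.of fun i j => if σ i = j then 1 else 0

/-- `k ∈ K(M,n)`: a nonnegative-integer `n×n` matrix all of whose row sums and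
column sums equal `M`. -/
def isDS (M n : ℕ) (k : Matrix (Fin n) (Fin n) ℕ) : Prop :=
  (∀ i, ∑ j, k i j = M) ∧ (∀ j, ∑ i, k i j = M)

/-- `C_{M,n}(k)`: the number of `M`-tuples `(σ_1,…,σ_M)` of permutations of `{1,…,n}`
with `Σ_m P_{σ_m} = k`. -/
def Ccoef (M n : ℕ) (k : Matrix (Fin n) (Fin n) ℕ) : ℕ :=
  Nat.card {σs : Fin M → Equiv.Perm (Fin n) // (∑ m, permMat (σs m)) = k}

/-- `C_{B,M,n}(k) = (M!)^{2n} · (∏_{i,j} (M−k(i,j))!) / ((M!)^{n²} · ∏_{i,j} k(i,j)!)`. -/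
def CB (M n : ℕ) (k : Matrix (Fin n) (Fin n) ℕ) : ℝ :=
  ((M.factorial : ℝ) ^ (2 * n) * ∏ i, ∏ j, ((M - k i j).factorial : ℝ)) /
    ((M.factorial : ℝ) ^ (n ^ 2) * ∏ i, ∏ j, ((k i j).factorial : ℝ))

/-- The `P_M`-lifting `θ↑P_M`: the `nM×nM` matrix with entries
`(θ↑P_M)((i,m),(j,m')) = θ(i,j)·P^{(i,j)}(m,m')`. -/
def liftMat {n M : ℕ} (θ : Matrix (Fin n) (Fin n) ℝ)
    (P : Fin n → Fin n → Equiv.Perm (Fin M)) :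
    Matrix (Fin n × Fin M) (Fin n × Fin M) ℝ :=
  Matrix.of fun p q => θ p.1 q.1 * (if P p.1 q.1 p.2 = q.2 then 1 else 0)

/-- `⟨perm(θ↑P_M)⟩`: the arithmetic average of `perm(θ↑P_M)` over all `(M!)^{n²}`
collections `P_M` of `n²` permutation matrices of size `M×M`. -/
def avgLiftPerm (n M : ℕ) (θ : Matrix (Fin n) (Fin n) ℝ) : ℝ :=
  (∑ P : Fin n → Fin n → Equiv.Perm (Fin M), perm' (liftMat θ P)) /
    (Fintype.card (Fin n → Fin n → Equiv.Perm (Fin M)) : ℝ)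

/-!
Both sides of the identity are sums over objects that carry a contingency table `k ∈ K(M,n)`.
Expanding the permanent of a lift gives a sum over permutations `τ` of `[n] × [M]`, and its
average over all lifts weights `τ` by `∏ θ(i,j)^k(i,j) · (M - k(i,j))! / M!`, where `k(i,j)` counts
the points of block `i` which `τ` moves to block `j`. There are `(M!)^(2n) / ∏ k(i,j)!` such `τ` for
each `k`, so `C_{B,M,n}(k)` is their total weight up to the factor `∏ θ(i,j)^k(i,j)`. On the other
side, a tuple `(σ_1,…,σ_M)` has weight `∏ θ(i,j)^k(i,j)` for `k = Σ_m P_{σ_m}`, and `C_{M,n}(k)`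
tuples share it. Every `k` is reached by some tuple, by Hall's theorem, so the sum over `τ` can be
traded for a sum over tuples.
-/

section Fibers

open Finset

variable {α β γ : Type*} [Fintype α] [Fintype β] [DecidableEq γ]

theorem sum_comp_eq_sum_card_fiber_div_card_fiber_mul {𝕜 : Type*} [Field 𝕜] [CharZero 𝕜]
    (f : α → γ) (g : β → γ) (hfg : Set.range f ⊆ Set.range g) (F : γ → 𝕜) :
    ∑ a, F (f a) = ∑ b, (#{a | f a = g b} : 𝕜) / #{b' | g b' = g b} * F (g b) := by
  have hsub : univ.image f ⊆ univ.image g := by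
    simpa [← coe_subset] using hfg
  rw [sum_comp F f,
    sum_comp (fun c => (#{a | f a = c} : 𝕜) / #{b | g b = c} * F c) g]
  refine sum_subset_zero_on_sdiff hsub (fun c hc => ?_) fun c hc => ?_
  · have hempty : #{a | f a = c} = 0 := by
      simpa [filter_eq_empty_iff] using (mem_sdiff.1 hc).2
    simp [hempty]
  · have hne : (#{b | g b = c} : 𝕜) ≠ 0 := by
      simpa [filter_eq_empty_iff] using hsub hc
    rw [nsmul_eq_mul, nsmul_eq_mul, ← mul_assoc, mul_div_cancel₀ _ hne]

variable [DecidableEq α]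

theorem card_perm_comp_eq [Fintype γ] {g h : α → γ} (hgh : ∀ c, #{a | h a = c} = #{a | g a = c}) :
    #{τ : Equiv.Perm α | g ∘ τ = h} = ∏ c, (#{a | g a = c}).factorial := by
  have e (c : γ) : {a // h a = c} ≃ {a // g a = c} :=
    Fintype.equivOfCardEq (by simpa only [Fintype.card_subtype] using hgh c)
  obtain ⟨τ₀, hτ₀⟩ : ∃ τ₀ : Equiv.Perm α, g ∘ τ₀ = h :=
    ⟨Equiv.ofFiberEquiv e, funext (Equiv.ofFiberEquiv_map e)⟩
  simp only [← Fintype.card_subtype, ← DomMulAct.stabilizer_card g]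
  refine Fintype.card_congr ((Equiv.mulRight τ₀⁻¹).subtypeEquiv fun τ => ?_)
  rw [← hτ₀, Equiv.coe_mulRight, Equiv.Perm.coe_mul, ← Function.comp_assoc,
    Equiv.Perm.inv_def, Equiv.comp_symm_eq]

theorem card_perm_extending (s : Finset α) {h : α → α} (hh : Set.InjOn h s) :
    #{τ : Equiv.Perm α | ∀ a ∈ s, τ a = h a} = (Fintype.card α - #s).factorial := by
  obtain ⟨τ₀, hτ₀⟩ : ∃ τ₀ : Equiv.Perm α, ∀ a ∈ s, τ₀ a = h a := by
    obtain ⟨e, he⟩ := exists_equiv_extend_of_card_eq (t := univ) rfl (subset_univ _) hh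
    exact ⟨e.trans (Equiv.subtypeUnivEquiv mem_univ), he⟩
  have hcompl : Fintype.card {a // a ∉ s} = Fintype.card α - #s := by
    rw [Fintype.card_subtype_compl, Fintype.card_coe]
  rw [← hcompl, ← Fintype.card_perm,
    Fintype.card_congr (Equiv.Perm.subtypeEquivSubtypePerm (· ∉ s)), ← Fintype.card_subtype]
  refine Fintype.card_congr ((Equiv.mulLeft τ₀⁻¹).subtypeEquiv fun τ => forall_congr' fun a => ?_)
  simp only [not_not, Equiv.coe_mulLeft, Equiv.Perm.coe_mul, Function.comp_apply,
    Equiv.Perm.inv_eq_iff_eq]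
  exact forall_congr' fun ha => by rw [hτ₀ a ha]

end Fibers

section ContingencyTable

open Finset

variable {α ι κ : Type*} [Fintype α] [DecidableEq ι] [DecidableEq κ]

/-- The contingency table of two labellings `f` and `g` of a finite set: its entry at `(i, j)` is
the number of points with labels `i` and `j`. -/
def contingencyTable (f : α → ι) (g : α → κ) : Matrix ι κ ℕ :=
  Matrix.of fun i j => #{a | f a = i ∧ g a = j}

theorem contingencyTable_comp_perm (f : α → ι) (g : α → κ) (τ : Equiv.Perm α) :
    contingencyTable (f ∘ τ) (g ∘ τ) = contingencyTable f g := by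
  ext i j
  exact card_equiv τ fun a => by simp

theorem sum_contingencyTable_row [Fintype κ] (f : α → ι) (g : α → κ) (i : ι) :
    ∑ j, contingencyTable f g i j = #{a | f a = i} := by
  simp only [contingencyTable, Matrix.of_apply, ← filter_filter]
  exact (card_eq_sum_card_fiberwise fun _ _ => mem_coe.2 (mem_univ _)).symm

theorem sum_contingencyTable_col [Fintype ι] (f : α → ι) (g : α → κ) (j : κ) :
    ∑ i, contingencyTable f g i j = #{a | g a = j} := by
  simpa only [contingencyTable, Matrix.of_apply, and_comm] using sum_contingencyTable_row g f j

theorem prod_apply_eq_prod_pow_contingencyTable [Fintype ι] [Fintype κ] {R : Type*} [CommMonoid R]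
    (θ : Matrix ι κ R) (f : α → ι) (g : α → κ) :
    ∏ a, θ (f a) (g a) = ∏ i, ∏ j, θ i j ^ contingencyTable f g i j := by
  rw [← Fintype.prod_prod_type', ← prod_fiberwise' univ (fun a => (f a, g a)) fun c => θ c.1 c.2]
  simp [contingencyTable, Prod.ext_iff]

theorem contingencyTable_fst_apply {μ : Type*} [Fintype ι] [Fintype μ] (g : ι × μ → κ)
    (i : ι) (j : κ) : contingencyTable Prod.fst g i j = #{m | g (i, m) = j} := by
  simp only [contingencyTable, Matrix.of_apply, card_filter, Fintype.sum_prod_type]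
  rw [Fintype.sum_eq_single i fun i' hi' => by simp [hi']]
  simp

theorem exists_contingencyTable_eq [Fintype κ] (f : α → ι) {k : Matrix ι κ ℕ}
    (hrow : ∀ i, ∑ j, k i j = #{a | f a = i}) : ∃ g : α → κ, contingencyTable f g = k := by
  have e (i : ι) : {a // f a = i} ≃ Σ j, Fin (k i j) :=
    Fintype.equivOfCardEq (by simp [Fintype.card_subtype, hrow])
  refine ⟨fun a => (e (f a) ⟨a, rfl⟩).1, ?_⟩
  ext i j
  have hfiber : {a // f a = i ∧ (e (f a) ⟨a, rfl⟩).1 = j} ≃ Fin (k i j) :=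
    calc {a // f a = i ∧ (e (f a) ⟨a, rfl⟩).1 = j}
      _ ≃ {a : {a // f a = i} // (e (f a) ⟨a, rfl⟩).1 = j} :=
        (Equiv.subtypeSubtypeEquivSubtypeInter _ _).symm
      _ ≃ {x : Σ j, Fin (k i j) // x.1 = j} :=
        (e i).subtypeEquiv fun ⟨a, ha⟩ => by subst ha; rfl
      _ ≃ Fin (k i j) := Equiv.sigmaSubtype j
  rw [contingencyTable, Matrix.of_apply, ← Fintype.card_subtype, Fintype.card_congr hfiber,
    Fintype.card_fin]

variable [DecidableEq α] [Fintype ι] [Fintype κ]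

theorem card_contingencyTable_eq_mul_prod_factorial (f : α → ι) {k : Matrix ι κ ℕ}
    (hrow : ∀ i, ∑ j, k i j = #{a | f a = i}) :
    #{g : α → κ | contingencyTable f g = k} * ∏ i, ∏ j, (k i j).factorial =
      ∏ i, (#{a | f a = i}).factorial := by
  obtain ⟨g₀, rfl⟩ := exists_contingencyTable_eq f hrow
  -- Count the stabilizer of `f` along `τ ↦ g₀ ∘ τ`, whose fibres all have `∏ k(i,j)!` elements.
  have hmaps : Set.MapsTo (fun τ : Equiv.Perm α => g₀ ∘ τ)
      ({τ : Equiv.Perm α | f ∘ τ = f} : Finset (Equiv.Perm α))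
      ({g | contingencyTable f g = contingencyTable f g₀} : Finset (α → κ)) := by
    intro τ hτ
    have hτf : f ∘ τ = f := by simpa using hτ
    simpa [hτf] using contingencyTable_comp_perm f g₀ τ
  rw [← card_perm_comp_eq (g := f) fun _ => rfl, card_eq_sum_card_fiberwise hmaps]
  refine (sum_const_nat fun g hg => ?_).symm
  have hgtable : contingencyTable f g = contingencyTable f g₀ := (mem_filter.1 hg).2
  have hpair (c : ι × κ) : #{a | (f a, g a) = c} = #{a | (f a, g₀ a) = c} := by
    simpa [contingencyTable, Prod.ext_iff] using congr_fun₂ hgtable c.1 c.2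
  rw [filter_filter]
  calc #{τ : Equiv.Perm α | f ∘ τ = f ∧ g₀ ∘ τ = g}
    _ = #{τ : Equiv.Perm α | (fun a => (f a, g₀ a)) ∘ τ = fun a => (f a, g a)} := by
      simp [funext_iff, forall_and]
    _ = ∏ i, ∏ j, (contingencyTable f g₀ i j).factorial := by
      rw [card_perm_comp_eq hpair, Fintype.prod_prod_type]
      simp [contingencyTable]

theorem card_perm_contingencyTable_eq_card_mul (f : α → ι) (g : α → κ) {k : Matrix ι κ ℕ}
    (hcol : ∀ j, ∑ i, k i j = #{a | g a = j}) :
    #{τ : Equiv.Perm α | contingencyTable f (g ∘ τ) = k} =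
      #{h : α → κ | contingencyTable f h = k} * ∏ j, (#{a | g a = j}).factorial := by
  have hmaps : Set.MapsTo (fun τ : Equiv.Perm α => g ∘ τ)
      ({τ | contingencyTable f (g ∘ τ) = k} : Finset (Equiv.Perm α))
      ({h | contingencyTable f h = k} : Finset (α → κ)) := fun τ hτ => by simpa using hτ
  rw [card_eq_sum_card_fiberwise hmaps]
  refine sum_const_nat fun h hh => ?_
  obtain rfl : contingencyTable f h = k := (mem_filter.1 hh).2
  have hfiber (j : κ) : #{a | h a = j} = #{a | g a = j} := by
    rw [← hcol, sum_contingencyTable_col]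
  rw [← card_perm_comp_eq hfiber, filter_filter]
  exact congrArg card (filter_congr fun τ _ => and_iff_right_of_imp fun hτ => hτ ▸ rfl)

theorem card_perm_contingencyTable_eq_mul_prod_factorial (f : α → ι) (g : α → κ)
    {k : Matrix ι κ ℕ} (hrow : ∀ i, ∑ j, k i j = #{a | f a = i})
    (hcol : ∀ j, ∑ i, k i j = #{a | g a = j}) :
    #{τ : Equiv.Perm α | contingencyTable f (g ∘ τ) = k} * ∏ i, ∏ j, (k i j).factorial =
      (∏ i, (#{a | f a = i}).factorial) * ∏ j, (#{a | g a = j}).factorial := by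
  rw [card_perm_contingencyTable_eq_card_mul f g hcol, mul_right_comm,
    card_contingencyTable_eq_mul_prod_factorial f hrow]

end ContingencyTable

section Birkhoff

open Finset

variable {ι κ : Type*} [Fintype ι] [Fintype κ]

theorem exists_injective_pos_of_le_row_sum_of_col_sum_le {R : Type*} [AddCommMonoid R]
    [LinearOrder R] [IsOrderedCancelAddMonoid R] {k : Matrix ι κ R} {d : R} (hd : 0 < d)
    (hk : ∀ i j, 0 ≤ k i j) (hrow : ∀ i, d ≤ ∑ j, k i j) (hcol : ∀ j, ∑ i, k i j ≤ d) :
    ∃ f : ι → κ, Function.Injective f ∧ ∀ i, 0 < k i (f i) := by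
  classical
  let support (i : ι) : Finset κ := {j | 0 < k i j}
  suffices hhall : ∀ s : Finset ι, #s ≤ #(s.biUnion support) by
    simpa [support] using (all_card_le_biUnion_card_iff_exists_injective support).1 hhall
  intro s
  set t : Finset κ := s.biUnion support
  have hsupp (i) (hi : i ∈ s) : ∑ j ∈ t, k i j = ∑ j, k i j :=
    sum_subset (subset_univ t) fun j _ hj =>
      le_antisymm (not_lt.1 fun hpos => hj (by simpa [t, support] using ⟨i, hi, hpos⟩)) (hk i j)
  refine (nsmul_le_nsmul_iff_left hd).1 ?_
  calc #s • d
    _ ≤ ∑ i ∈ s, ∑ j, k i j := card_nsmul_le_sum _ _ _ fun i _ => hrow i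
    _ = ∑ j ∈ t, ∑ i ∈ s, k i j := by rw [← sum_congr rfl hsupp, sum_comm]
    _ ≤ ∑ j ∈ t, ∑ i, k i j := sum_le_sum fun j _ =>
      sum_le_sum_of_subset_of_nonneg (subset_univ s) fun i _ _ => hk i j
    _ ≤ #t • d := sum_le_card_nsmul _ _ _ fun j _ => hcol j

theorem exists_sum_permMatrix_eq [DecidableEq ι] {M : ℕ} {k : Matrix ι ι ℕ}
    (hrow : ∀ i, ∑ j, k i j = M) (hcol : ∀ j, ∑ i, k i j = M) :
    ∃ σs : Fin M → Equiv.Perm ι, ∑ m, (σs m).permMatrix ℕ = k := by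
  induction M generalizing k with
  | zero =>
    refine ⟨Fin.elim0, ?_⟩
    ext i j
    simpa using (sum_eq_zero_iff.1 (hrow i) j (mem_univ j)).symm
  | succ M ih =>
    obtain ⟨f, hf, hpos⟩ := exists_injective_pos_of_le_row_sum_of_col_sum_le M.succ_pos
      (fun i j => (k i j).zero_le) (fun i => (hrow i).ge) fun j => (hcol j).le
    let σ : Equiv.Perm ι := Equiv.ofBijective f (Finite.injective_iff_bijective.1 hf)
    have hσ (i j) : σ.permMatrix ℕ i j ≤ k i j := by
      by_cases h : f i = j
      · simpa [σ, PEquiv.toMatrix_apply, h] using h ▸ hpos i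
      · simp [σ, PEquiv.toMatrix_apply, h]
    obtain ⟨k', rfl⟩ : ∃ k', k = σ.permMatrix ℕ + k' :=
      ⟨k - σ.permMatrix ℕ, Matrix.ext fun i j => (Nat.add_sub_cancel' (hσ i j)).symm⟩
    have hdoubly : σ.permMatrix ℕ ∈ doublyStochastic ℕ ι := permMatrix_mem_doublyStochastic
    simp only [Matrix.add_apply, sum_add_distrib, sum_row_of_mem_doublyStochastic hdoubly,
      sum_col_of_mem_doublyStochastic hdoubly, add_comm 1, add_left_inj] at hrow hcol
    obtain ⟨σs, rfl⟩ := ih hrow hcol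
    exact ⟨Fin.cons σ σs, by simp [Fin.sum_univ_succ]⟩

end Birkhoff

section BlockTable

open Finset

variable {ι μ : Type*} [Fintype ι] [DecidableEq ι] [Fintype μ]

/-- For a permutation `τ` of `ι × μ`, cut into the blocks `{i} × μ`, the matrix counting the
points of block `i` which `τ` moves to block `j`. -/
def blockTable (τ : Equiv.Perm (ι × μ)) : Matrix ι ι ℕ :=
  contingencyTable Prod.fst (Prod.fst ∘ τ)

theorem card_fst_eq (i : ι) : #{p : ι × μ | p.1 = i} = Fintype.card μ := by
  rw [card_filter, Fintype.sum_prod_type_right]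
  simp

theorem sum_blockTable_row (τ : Equiv.Perm (ι × μ)) (i : ι) :
    ∑ j, blockTable τ i j = Fintype.card μ := by
  rw [blockTable, sum_contingencyTable_row, card_fst_eq]

theorem sum_blockTable_col (τ : Equiv.Perm (ι × μ)) (j : ι) :
    ∑ i, blockTable τ i j = Fintype.card μ := by
  rw [blockTable, sum_contingencyTable_col, ← card_fst_eq j]
  exact card_equiv τ fun p => by simp

theorem blockTable_apply (τ : Equiv.Perm (ι × μ)) (i j : ι) :
    blockTable τ i j = #{m | (τ (i, m)).1 = j} :=
  contingencyTable_fst_apply _ i j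

variable [DecidableEq μ]

theorem card_blockTable_eq_mul_prod_factorial {k : Matrix ι ι ℕ}
    (hrow : ∀ i, ∑ j, k i j = Fintype.card μ) (hcol : ∀ j, ∑ i, k i j = Fintype.card μ) :
    #{τ : Equiv.Perm (ι × μ) | blockTable τ = k} * ∏ i, ∏ j, (k i j).factorial =
      (Fintype.card μ).factorial ^ (2 * Fintype.card ι) := by
  refine (card_perm_contingencyTable_eq_mul_prod_factorial (α := ι × μ) Prod.fst Prod.fst
    (by simpa only [card_fst_eq]) (by simpa only [card_fst_eq])).trans ?_
  simp only [card_fst_eq, prod_const, card_univ, two_mul, pow_add]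

theorem card_lift_eq_prod_factorial (τ : Equiv.Perm (ι × μ)) :
    #{P : ι → ι → Equiv.Perm μ | ∀ p : ι × μ, P p.1 (τ p).1 p.2 = (τ p).2} =
      ∏ i, ∏ j, (Fintype.card μ - blockTable τ i j).factorial := by
  have hblock (i j : ι) :
      #{Q : Equiv.Perm μ | ∀ m ∈ ({m | (τ (i, m)).1 = j} : Finset μ), Q m = (τ (i, m)).2} =
        (Fintype.card μ - blockTable τ i j).factorial := by
    rw [blockTable_apply]
    refine card_perm_extending _ fun m hm m' hm' hsnd => ?_
    have hfst : (τ (i, m)).1 = (τ (i, m')).1 := by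
      simp_all
    exact (Prod.ext_iff.1 (τ.injective (Prod.ext hfst hsnd))).2
  simp only [← hblock, ← Fintype.card_piFinset]
  congr 1
  ext P
  simp only [mem_filter, mem_univ, true_and, Fintype.mem_piFinset, Prod.forall]
  exact ⟨fun h i j m hm => hm ▸ h i m, fun h i m => h i _ m rfl⟩

end BlockTable

section Lifting

open Finset

variable {n M : ℕ}

theorem perm'_nonneg {α : Type*} [Fintype α] [DecidableEq α] {A : Matrix α α ℝ}
    (hA : ∀ i j, 0 ≤ A i j) : 0 ≤ perm' A :=
  sum_nonneg fun _ _ => prod_nonneg fun _ _ => hA _ _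

theorem perm'_pos {α : Type*} [Fintype α] [DecidableEq α] {A : Matrix α α ℝ}
    (hA : ∀ i j, 0 ≤ A i j) (hex : ∃ σ : Equiv.Perm α, 0 < ∏ i, A i (σ i)) : 0 < perm' A :=
  let ⟨σ, hσ⟩ := hex
  sum_pos' (fun _ _ => prod_nonneg fun _ _ => hA _ _) ⟨σ, mem_univ σ, hσ⟩

theorem avgLiftPerm_nonneg {θ : Matrix (Fin n) (Fin n) ℝ} (hθ : ∀ i j, 0 ≤ θ i j) :
    0 ≤ avgLiftPerm n M θ :=
  div_nonneg (sum_nonneg fun _ _ => perm'_nonneg fun _ _ => mul_nonneg (hθ _ _) (by positivity))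
    (Nat.cast_nonneg _)

theorem sum_perm'_liftMat (θ : Matrix (Fin n) (Fin n) ℝ) :
    ∑ P : Fin n → Fin n → Equiv.Perm (Fin M), perm' (liftMat θ P) =
      ∑ τ : Equiv.Perm (Fin n × Fin M), (∏ i, ∏ j, θ i j ^ blockTable τ i j) *
        ∏ i, ∏ j, ((M - blockTable τ i j).factorial : ℝ) := by
  simp only [perm', liftMat, Matrix.of_apply, prod_mul_distrib]
  rw [sum_comm]
  refine sum_congr rfl fun τ _ => ?_
  rw [← mul_sum]
  congr 1
  · exact prod_apply_eq_prod_pow_contingencyTable θ Prod.fst (Prod.fst ∘ τ)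
  · simpa [prod_boole] using congrArg (Nat.cast (R := ℝ)) (card_lift_eq_prod_factorial τ)

theorem permMat_eq_permMatrix (σ : Equiv.Perm (Fin n)) : permMat σ = σ.permMatrix ℕ := by
  ext i j
  simp [permMat, PEquiv.toMatrix_apply]

theorem isDS_blockTable (τ : Equiv.Perm (Fin n × Fin M)) : isDS M n (blockTable τ) := by
  simp [isDS, sum_blockTable_row, sum_blockTable_col]

theorem exists_sum_permMat_eq_of_isDS {k : Matrix (Fin n) (Fin n) ℕ} (hk : isDS M n k) :
    ∃ σs : Fin M → Equiv.Perm (Fin n), ∑ m, permMat (σs m) = k := by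
  simpa only [permMat_eq_permMatrix] using exists_sum_permMatrix_eq hk.1 hk.2

theorem sum_permMat_eq_blockTable (σs : Fin M → Equiv.Perm (Fin n)) :
    ∑ m, permMat (σs m) = blockTable (Equiv.prodCongrLeft σs) := by
  ext i j
  rw [blockTable_apply, card_filter, Matrix.sum_apply]
  rfl

theorem prod_prod_apply_eq_prod_pow_sum_permMat (θ : Matrix (Fin n) (Fin n) ℝ)
    (σs : Fin M → Equiv.Perm (Fin n)) :
    ∏ m, ∏ i, θ i (σs m i) = ∏ i, ∏ j, θ i j ^ (∑ m, permMat (σs m)) i j := by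
  rw [sum_permMat_eq_blockTable, blockTable, ← prod_apply_eq_prod_pow_contingencyTable,
    Fintype.prod_prod_type_right]
  rfl

theorem Ccoef_eq_card (k : Matrix (Fin n) (Fin n) ℕ) :
    Ccoef M n k = #{σs : Fin M → Equiv.Perm (Fin n) | ∑ m, permMat (σs m) = k} := by
  rw [Ccoef, Nat.card_eq_fintype_card, Fintype.card_subtype]

theorem CB_eq_card_mul_div {k : Matrix (Fin n) (Fin n) ℕ} (hk : isDS M n k) :
    CB M n k = #{τ : Equiv.Perm (Fin n × Fin M) | blockTable τ = k} *
      (∏ i, ∏ j, ((M - k i j).factorial : ℝ)) / (M.factorial : ℝ) ^ (n ^ 2) := by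
  have hcard : (#{τ : Equiv.Perm (Fin n × Fin M) | blockTable τ = k} : ℝ) *
      ∏ i, ∏ j, ((k i j).factorial : ℝ) = (M.factorial : ℝ) ^ (2 * n) := by
    exact_mod_cast (card_blockTable_eq_mul_prod_factorial (μ := Fin M)
      (by simpa using hk.1) (by simpa using hk.2)).trans (by simp)
  have hfact : ∏ i, ∏ j, ((k i j).factorial : ℝ) ≠ 0 := by
    simp [prod_ne_zero_iff, Nat.factorial_ne_zero]
  rw [CB, ← hcard]
  field_simp

theorem avgLiftPerm_eq_sum (θ : Matrix (Fin n) (Fin n) ℝ) :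
    avgLiftPerm n M θ = ∑ σs : Fin M → Equiv.Perm (Fin n), (∏ m, ∏ i, θ i (σs m i)) *
      (CB M n (∑ m, permMat (σs m)) / (Ccoef M n (∑ m, permMat (σs m)) : ℝ)) := by
  have hlifts : (Fintype.card (Fin n → Fin n → Equiv.Perm (Fin M)) : ℝ) =
      (M.factorial : ℝ) ^ (n ^ 2) := by
    simp [Fintype.card_perm, sq, pow_mul]
  have hrange : Set.range (blockTable (ι := Fin n) (μ := Fin M)) ⊆
      Set.range fun σs : Fin M → Equiv.Perm (Fin n) => ∑ m, permMat (σs m) := by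
    rintro _ ⟨τ, rfl⟩
    exact exists_sum_permMat_eq_of_isDS (isDS_blockTable τ)
  rw [avgLiftPerm, sum_perm'_liftMat, hlifts,
    sum_comp_eq_sum_card_fiber_div_card_fiber_mul _ _ hrange fun k =>
      (∏ i, ∏ j, θ i j ^ k i j) * ∏ i, ∏ j, ((M - k i j).factorial : ℝ), sum_div]
  refine sum_congr rfl fun σs _ => ?_
  have hk : isDS M n (∑ m, permMat (σs m)) := sum_permMat_eq_blockTable σs ▸ isDS_blockTable _
  rw [prod_prod_apply_eq_prod_pow_sum_permMat, CB_eq_card_mul_div hk, Ccoef_eq_card]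
  ring

theorem sum_prod_div_perm'_mul_CB_div_Ccoef (θ : Matrix (Fin n) (Fin n) ℝ) :
    ∑ σs : Fin M → Equiv.Perm (Fin n), (∏ m, (∏ i, θ i (σs m i)) / perm' θ) *
      (CB M n (∑ m, permMat (σs m)) / (Ccoef M n (∑ m, permMat (σs m)) : ℝ)) =
      avgLiftPerm n M θ / perm' θ ^ M := by
  simp only [avgLiftPerm_eq_sum, sum_div, prod_div_distrib, prod_const, card_univ,
    Fintype.card_fin, div_mul_eq_mul_div]

end Lifting

/-- For `n, M ≥ 1` and a nonnegative `n×n` matrix `θ` having a permutation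
of positive weight, with `p_θ(σ) = (∏_i θ(i,σ(i)))/perm(θ)`:
`perm(θ)/perm_{B,M}(θ)
  = (Σ_{(σ_1,…,σ_M)} (∏_m p_θ(σ_m)) · C_{B,M,n}(k)/C_{M,n}(k))^{−1/M}`,
where `k = Σ_m P_{σ_m}` and `perm_{B,M}(θ) = ⟨perm(θ↑P_M)⟩^{1/M}`. -/
theorem statement_15 (n M : ℕ) (hn : 1 ≤ n) (hM : 1 ≤ M)
    (θ : Matrix (Fin n) (Fin n) ℝ) (hθ : ∀ i j, 0 ≤ θ i j)
    (hex : ∃ σ : Equiv.Perm (Fin n), 0 < ∏ i, θ i (σ i)) :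
    perm' θ / (avgLiftPerm n M θ) ^ (1 / (M : ℝ)) =
      (∑ σs : Fin M → Equiv.Perm (Fin n),
          (∏ m, (∏ i, θ i (σs m i)) / perm' θ) *
            (CB M n (∑ m, permMat (σs m)) / (Ccoef M n (∑ m, permMat (σs m)) : ℝ))) ^
        (-(1 / (M : ℝ))) := by
  have hperm : 0 < perm' θ := perm'_pos hθ hex
  have havg : 0 ≤ avgLiftPerm n M θ := avgLiftPerm_nonneg hθ
  have hroot : (perm' θ ^ M) ^ (1 / (M : ℝ)) = perm' θ := by
    rw [one_div, Real.pow_rpow_inv_natCast hperm.le (Nat.one_le_iff_ne_zero.1 hM)]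
  rw [sum_prod_div_perm'_mul_CB_div_Ccoef, Real.rpow_neg (by positivity),
    Real.div_rpow havg (by positivity), hroot, inv_div]
end
end

section
/- Let n, M ≥ 1 be integers and let θ be an n×n matrix with nonnegative real entries such that ∏_{i} θ(i,σ(i)) > 0 for at least one permutation σ ∈ S_n. Then perm(θ) · ⟨perm(θ↑P_M)⟩ ≥ ⟨perm(θ↑P_{M+1})⟩, where the first average is over all collections of n² permutation matrices of size M×M and the second average is over all collections of n² permutation matrices of size (M+1)×(M+1). Equivalently, perm_{B,1}(θ)^1 · perm_{B,M}(θ)^M ≥ perm_{B,M+1}(θ)^{M+1}, which is the M_1 = 1 case of the conjecture (perm_{B,M_1}(θ))^{M_1}·(perm_{B,M_2}(θ))^{M_2} ≥ (perm_{B,M_1+M_2}(θ))^{M_1+M_2}. -/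
open scoped BigOperators

noncomputable section

/-!
Averaging over the lifts turns `⟨perm(θ↑P_N)⟩` into a sum over the permutations `τ` of `[n] × [N]`,
in which the weight of `τ` depends only on how many points `τ` moves from each block `i` to each
block `j`. For `N = M + 1` these counts, divided by `N`, form a doubly stochastic matrix `x`, and
Schrijver's inequality `∏ (1 - x i j) ≤ perm (x i j * (1 - x i j))` bounds the weight of `τ` by a
sum over the permutations `σ` of `[n]` and the layers of `τ` of type `σ`, i.e. the ways to select in
every block `i` one point that `τ` moves to block `σ i`. Summing over `τ` and deleting the selected
layer leaves all permutations of `[n] × [M]`, each equally often, and the weight splits off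
`∏ θ i (σ i)`.

For Schrijver's inequality, interpolate by matching sums of the complete bipartite graph: cut every
edge into two half-edges carrying free positive weights, and join the edges one at a time. With all
edges cut the bound is the weighted AM-GM inequality. Joining an edge preserves it by the
correlation inequality `Z(S - i, T) Z(S, T - j) ≤ Z(S, T) Z(S - i, T - j)` for matching sums and a
suitable choice of the two weights on the edge.
-/

section Matching

open Finset Matrix

variable {ι κ R : Type*} [DecidableEq ι] [DecidableEq κ]

open scoped Classical in
/-- The matchings of the complete bipartite graph between `S` and `T`, as sets of edges. -/
def matchings (S : Finset ι) (T : Finset κ) : Finset (Finset (ι × κ)) :=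
  {F ∈ (S ×ˢ T).powerset | Set.InjOn Prod.fst (F : Set (ι × κ)) ∧
    Set.InjOn Prod.snd (F : Set (ι × κ))}

lemma mem_matchings {S : Finset ι} {T : Finset κ} {F : Finset (ι × κ)} :
    F ∈ matchings S T ↔ F ⊆ S ×ˢ T ∧ Set.InjOn Prod.fst (F : Set (ι × κ)) ∧
      Set.InjOn Prod.snd (F : Set (ι × κ)) := by
  simp [matchings]

lemma mk_notMem_of_mem_matchings {S : Finset ι} {T : Finset κ} {F : Finset (ι × κ)}
    (hF : F ∈ matchings S T) {i : ι} (hi : i ∉ S) (k : κ) : (i, k) ∉ F := fun h =>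
  hi (mem_product.1 ((mem_matchings.1 hF).1 h)).1

lemma image_swap_mem_matchings {S : Finset ι} {T : Finset κ} {F : Finset (ι × κ)}
    (hF : F ∈ matchings S T) : F.image Prod.swap ∈ matchings T S := by
  obtain ⟨hsub, hfst, hsnd⟩ := mem_matchings.1 hF
  refine mem_matchings.2 ⟨image_subset_iff.2 fun e he => ?_, ?_, ?_⟩
  · exact mem_product.2 (mem_product.1 (hsub he)).symm
  all_goals
    rw [coe_image]
    exact Set.InjOn.image_of_comp ‹_›

lemma matchings_insert_left {S : Finset ι} {i : ι} (hi : i ∉ S) (T : Finset κ) :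
    matchings (insert i S) T =
      matchings S T ∪ T.biUnion fun k => (matchings S (T.erase k)).image (insert (i, k)) := by
  ext F
  simp only [mem_union, mem_biUnion, mem_image]
  constructor
  · intro hF
    obtain ⟨hsub, hfst, hsnd⟩ := mem_matchings.1 hF
    by_cases hiF : ∃ k, (i, k) ∈ F
    · obtain ⟨k, hk⟩ := hiF
      refine .inr ⟨k, (mem_product.1 (hsub hk)).2, F.erase (i, k), mem_matchings.2
        ⟨fun e he => ?_, hfst.mono ?_, hsnd.mono ?_⟩, insert_erase hk⟩
      · obtain ⟨hne, heF⟩ := mem_erase.1 he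
        have hmem := mem_product.1 (hsub heF)
        exact mem_product.2
          ⟨mem_of_mem_insert_of_ne hmem.1 fun h => hne (hfst heF hk h),
            mem_erase.2 ⟨fun h => hne (hsnd heF hk h), hmem.2⟩⟩
      all_goals exact_mod_cast erase_subset _ _
    · refine .inl (mem_matchings.2 ⟨fun e he => ?_, hfst, hsnd⟩)
      have hmem := mem_product.1 (hsub he)
      exact mem_product.2
        ⟨mem_of_mem_insert_of_ne hmem.1 fun h => hiF ⟨e.2, h ▸ he⟩, hmem.2⟩
  · rintro (hF | ⟨k, hk, F, hF, rfl⟩)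
    · obtain ⟨hsub, hinj⟩ := mem_matchings.1 hF
      exact mem_matchings.2 ⟨hsub.trans (product_subset_product_left (subset_insert _ _)), hinj⟩
    · obtain ⟨hsub, hfst, hsnd⟩ := mem_matchings.1 hF
      have hmem {e : ι × κ} (he : e ∈ F) := mem_product.1 (hsub he)
      have hiF : (i, k) ∉ (F : Set (ι × κ)) := mk_notMem_of_mem_matchings hF hi k
      rw [mem_matchings, coe_insert, Set.injOn_insert hiF, Set.injOn_insert hiF]
      refine ⟨insert_subset (by simp [hk]) fun e he => ?_, ⟨hfst, ?_⟩, hsnd, ?_⟩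
      · exact mem_product.2 ⟨mem_insert_of_mem (hmem he).1, mem_of_mem_erase (hmem he).2⟩
      · rintro ⟨e, he, rfl⟩
        exact hi (hmem he).1
      · rintro ⟨e, he, rfl⟩
        exact notMem_erase _ _ (hmem he).2

/-- The partition function of the monomer-dimer model on the complete bipartite graph between `S`
and `T`: the sum over all matchings of the product of the weights `w i j` of the matched edges and
the weights `r i`, `c j` of the unmatched vertices on either side. -/
def matchingSum [CommSemiring R] (w : Matrix ι κ R) (r : ι → R) (c : κ → R) (S : Finset ι)
    (T : Finset κ) : R :=
  ∑ F ∈ matchings S T, (∏ e ∈ F, w e.1 e.2) * (∏ i ∈ S \ F.image Prod.fst, r i) *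
    ∏ j ∈ T \ F.image Prod.snd, c j

section CommSemiring

variable [CommSemiring R] {w : Matrix ι κ R} {r : ι → R} {c : κ → R} {S : Finset ι} {T : Finset κ}

lemma matchingSum_congr {w' : Matrix ι κ R} {r' : ι → R} {c' : κ → R}
    (hw : ∀ i ∈ S, ∀ j ∈ T, w i j = w' i j) (hr : ∀ i ∈ S, r i = r' i)
    (hc : ∀ j ∈ T, c j = c' j) : matchingSum w r c S T = matchingSum w' r' c' S T := by
  refine sum_congr rfl fun F hF => ?_
  have hFw : ∀ e ∈ F, w e.1 e.2 = w' e.1 e.2 := fun e he =>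
    have hmem := mem_product.1 ((mem_matchings.1 hF).1 he)
    hw _ hmem.1 _ hmem.2
  rw [prod_congr rfl hFw, prod_congr rfl fun i hi => hr i (mem_sdiff.1 hi).1,
    prod_congr rfl fun j hj => hc j (mem_sdiff.1 hj).1]

lemma matchingSum_transpose (w : Matrix ι κ R) (r : ι → R) (c : κ → R) (S : Finset ι)
    (T : Finset κ) : matchingSum wᵀ c r T S = matchingSum w r c S T := by
  have hfst (F : Finset (ι × κ)) : (F.image Prod.swap).image Prod.fst = F.image Prod.snd := by
    rw [image_image]; rfl
  have hsnd (F : Finset (ι × κ)) : (F.image Prod.swap).image Prod.snd = F.image Prod.fst := by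
    rw [image_image]; rfl
  symm
  refine sum_nbij' (image Prod.swap) (image Prod.swap) (fun F hF => image_swap_mem_matchings hF)
    (fun F hF => image_swap_mem_matchings hF) (fun F _ => by simp [image_image])
    (fun F _ => by simp [image_image]) fun F _ => ?_
  rw [hfst, hsnd, prod_image Prod.swap_injective.injOn]
  simp only [transpose_apply, Prod.fst_swap, Prod.snd_swap]
  ring

lemma matchingSum_insert_left {i : ι} (hi : i ∉ S) (T : Finset κ) :
    matchingSum w r c (insert i S) T =
      r i * matchingSum w r c S T + ∑ k ∈ T, w i k * matchingSum w r c S (T.erase k) := by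
  have hfst {T' : Finset κ} {F : Finset (ι × κ)} (hF : F ∈ matchings S T') :
      i ∉ F.image Prod.fst := fun h => by
    obtain ⟨e, he, rfl⟩ := mem_image.1 h
    exact mk_notMem_of_mem_matchings hF hi e.2 he
  have hinj (k : κ) : Set.InjOn (insert (i, k)) (matchings S (T.erase k) : Set (Finset (ι × κ))) :=
    fun F hF F' hF' h => by
      rw [← erase_insert (mk_notMem_of_mem_matchings hF hi k), h,
        erase_insert (mk_notMem_of_mem_matchings hF' hi k)]
  rw [matchingSum, matchings_insert_left hi, sum_union, sum_biUnion, matchingSum, mul_sum]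
  · congr 1
    · refine sum_congr rfl fun F hF => ?_
      rw [insert_sdiff_of_notMem _ (hfst hF), prod_insert (by simp [hi])]
      ring
    · refine sum_congr rfl fun k _ => ?_
      rw [sum_image (hinj k), matchingSum, mul_sum]
      refine sum_congr rfl fun F hF => ?_
      rw [prod_insert (mk_notMem_of_mem_matchings hF hi k), image_insert, image_insert,
        insert_sdiff_insert, sdiff_insert_of_notMem hi, sdiff_insert, erase_sdiff_comm]
      ring
  · intro k _ k' _ hkk'
    refine disjoint_left.2 fun F₁ hF₁ hF₂ => ?_
    obtain ⟨F, hF, rfl⟩ := mem_image.1 hF₁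
    obtain ⟨F', -, h⟩ := mem_image.1 hF₂
    have hk' : (i, k') ∈ insert (i, k) F := h ▸ mem_insert_self _ _
    exact mk_notMem_of_mem_matchings hF hi k'
      (mem_of_mem_insert_of_ne hk' fun h => hkk' (Prod.ext_iff.1 h).2.symm)
  · refine disjoint_left.2 fun F hF hF' => ?_
    obtain ⟨k, -, hk⟩ := mem_biUnion.1 hF'
    obtain ⟨F, -, rfl⟩ := mem_image.1 hk
    exact mk_notMem_of_mem_matchings hF hi k (mem_insert_self _ _)

lemma matchingSum_zero (r : ι → R) (c : κ → R) (S : Finset ι) (T : Finset κ) :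
    matchingSum 0 r c S T = (∏ i ∈ S, r i) * ∏ j ∈ T, c j := by
  induction S using Finset.induction_on with
  | empty =>
    have hempty : matchings (∅ : Finset ι) T = {∅} := by
      ext F
      simp +contextual [mem_matchings]
    simp [matchingSum, hempty]
  | insert i S hi ih => simp [matchingSum_insert_left hi, ih, prod_insert hi, mul_assoc]

lemma matchingSum_insert_right (S : Finset ι) {j : κ} (hj : j ∉ T) :
    matchingSum w r c S (insert j T) =
      c j * matchingSum w r c S T + ∑ k ∈ S, w k j * matchingSum w r c (S.erase k) T := by
  simp only [← matchingSum_transpose w, matchingSum_insert_left hj, transpose_apply]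

lemma matchingSum_add_single_left {i : ι} (hi : i ∈ S) (s : R) :
    matchingSum w (r + Pi.single i s) c S T =
      matchingSum w r c S T + s * matchingSum w r c (S.erase i) T := by
  have hcongr (T' : Finset κ) : matchingSum w (r + Pi.single i s) c (S.erase i) T' =
      matchingSum w r c (S.erase i) T' :=
    matchingSum_congr (fun _ _ _ _ => rfl)
      (fun k hk => by simp [Pi.single_eq_of_ne (ne_of_mem_erase hk)]) fun _ _ => rfl
  rw [← insert_erase hi, matchingSum_insert_left (notMem_erase i S),
    matchingSum_insert_left (notMem_erase i S), erase_insert (notMem_erase i S)]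
  simp only [hcongr, Pi.add_apply, Pi.single_eq_same]
  ring

lemma matchingSum_add_single_right {j : κ} (hj : j ∈ T) (t : R) :
    matchingSum w r (c + Pi.single j t) S T =
      matchingSum w r c S T + t * matchingSum w r c S (T.erase j) := by
  simp only [← matchingSum_transpose w, matchingSum_add_single_left hj]

lemma matchingSum_add_single {i : ι} {j : κ} (hi : i ∈ S) (hj : j ∈ T) (s : R) :
    matchingSum (w + single i j s) r c S T =
      matchingSum w r c S T + s * matchingSum w r c (S.erase i) (T.erase j) := by
  have hcongr (T' : Finset κ) : matchingSum (w + single i j s) r c (S.erase i) T' =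
      matchingSum w r c (S.erase i) T' :=
    matchingSum_congr
      (fun k hk l _ => by simp [single_apply_of_row_ne (ne_of_mem_erase hk).symm])
      (fun _ _ => rfl) fun _ _ => rfl
  rw [← insert_erase hi, matchingSum_insert_left (notMem_erase i S),
    matchingSum_insert_left (notMem_erase i S), erase_insert (notMem_erase i S)]
  simp only [hcongr, Matrix.add_apply, single_apply, true_and, add_mul, sum_add_distrib, ite_mul,
    zero_mul, sum_ite_eq, hj, if_true]
  ring

lemma image_graph_mem_matchings [Fintype ι] (σ : Equiv.Perm ι) :
    univ.image (fun i => (i, σ i)) ∈ matchings univ univ := by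
  simp [mem_matchings, Set.InjOn]

lemma exists_perm_of_mem_matchings [Fintype ι] {F : Finset (ι × ι)} (hF : F ∈ matchings univ univ)
    (hcover : F.image Prod.fst = univ) :
    ∃ σ : Equiv.Perm ι, univ.image (fun i => (i, σ i)) = F := by
  obtain ⟨-, hfst, hsnd⟩ := mem_matchings.1 hF
  have hex (i : ι) : ∃ k, (i, k) ∈ F := by
    obtain ⟨e, he, rfl⟩ := mem_image.1 (hcover ▸ mem_univ i)
    exact ⟨e.2, he⟩
  choose f hf using hex
  have hinj : Function.Injective f := fun i i' h =>
    (Prod.ext_iff.1 (hsnd (hf i) (hf i') h)).1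
  refine ⟨Equiv.ofBijective f (Finite.injective_iff_bijective.1 hinj), ?_⟩
  ext e
  simp only [mem_image, mem_univ, true_and, Equiv.ofBijective_apply]
  exact ⟨by rintro ⟨i, rfl⟩; exact hf i, fun he => ⟨e.1, hfst (hf e.1) he rfl⟩⟩

lemma matchingSum_univ_zero_zero [Fintype ι] (w : Matrix ι ι R) :
    matchingSum w 0 0 univ univ = w.permanent := by
  rw [← permanent_transpose]
  symm
  refine sum_of_injOn (fun σ : Equiv.Perm ι => univ.image fun i => (i, σ i)) ?_
    (fun σ _ => image_graph_mem_matchings σ) (fun F hF hF' => ?_) fun σ _ => ?_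
  · intro σ _ τ _ h
    ext1 i
    have hi : (i, σ i) ∈ univ.image fun i => (i, τ i) :=
      (Finset.ext_iff.1 h _).1 (mem_image_of_mem _ (mem_univ i))
    obtain ⟨k, -, hk⟩ := mem_image.1 hi
    obtain ⟨rfl, hσ⟩ := Prod.ext_iff.1 hk
    exact hσ.symm
  · have hcover : F.image Prod.fst ≠ univ := fun h => hF' <| by
      obtain ⟨σ, hσ⟩ := exists_perm_of_mem_matchings hF h
      exact ⟨σ, by simp, hσ⟩
    obtain ⟨i, hi⟩ : ∃ i, i ∉ F.image Prod.fst := by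
      simpa only [ne_eq, eq_univ_iff_forall, not_forall] using hcover
    rw [prod_eq_zero (mem_sdiff.2 ⟨mem_univ i, hi⟩) rfl, mul_zero, zero_mul]
  · have hfst : (univ.image fun i => (i, σ i)).image Prod.fst = univ := by
      ext i; simp
    have hsnd : (univ.image fun i => (i, σ i)).image Prod.snd = univ := by
      ext j; simpa using σ.surjective j
    rw [hfst, hsnd, prod_image fun i _ i' _ h => (Prod.ext_iff.1 h).1]
    simp

end CommSemiring

section Order

variable [CommRing R] [LinearOrder R] [IsStrictOrderedRing R] {w : Matrix ι κ R} {r : ι → R}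
  {c : κ → R}

lemma matchingSum_nonneg (hw : ∀ i j, 0 ≤ w i j) (hr : ∀ i, 0 ≤ r i) (hc : ∀ j, 0 ≤ c j)
    (S : Finset ι) (T : Finset κ) : 0 ≤ matchingSum w r c S T :=
  sum_nonneg fun _ _ => mul_nonneg
    (mul_nonneg (prod_nonneg fun _ _ => hw _ _) (prod_nonneg fun _ _ => hr _))
    (prod_nonneg fun _ _ => hc _)

lemma matchingSum_insert_right_mul_le (hw : ∀ i j, 0 ≤ w i j) {S : Finset ι} {T U : Finset κ}
    {j : κ} (hT : j ∉ T) (hU : j ∉ U)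
    (h : ∀ i ∈ S, matchingSum w r c (S.erase i) T * matchingSum w r c S U ≤
      matchingSum w r c (S.erase i) U * matchingSum w r c S T) :
    matchingSum w r c S (insert j T) * matchingSum w r c S U ≤
      matchingSum w r c S (insert j U) * matchingSum w r c S T := by
  have hsum : (∑ i ∈ S, w i j * matchingSum w r c (S.erase i) T) * matchingSum w r c S U ≤
      (∑ i ∈ S, w i j * matchingSum w r c (S.erase i) U) * matchingSum w r c S T := by
    simp only [sum_mul, mul_assoc]
    exact sum_le_sum fun i hi => mul_le_mul_of_nonneg_left (h i hi) (hw i j)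
  rw [matchingSum_insert_right S hT, matchingSum_insert_right S hU]
  linarith

lemma matchingSum_insert_mul_insert_le (hw : ∀ i j, 0 ≤ w i j) {S : Finset ι} {T : Finset κ}
    {i : ι} {j : κ} (hi : i ∉ S) (hj : j ∉ T) :
    matchingSum w r c S (insert j T) * matchingSum w r c (insert i S) T ≤
      matchingSum w r c (insert i S) (insert j T) * matchingSum w r c S T := by
  induction hN : S.card using Nat.strong_induction_on generalizing S T i j with
  | _ N ih =>
    have hsame : ∀ k ∈ T, matchingSum w r c S (insert j T) * matchingSum w r c S (T.erase k) ≤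
        matchingSum w r c S (insert j (T.erase k)) * matchingSum w r c S T := by
      refine fun k hk => matchingSum_insert_right_mul_le hw hj
        (fun h => hj (mem_of_mem_erase h)) fun l hl => ?_
      have hih := ih _ (hN ▸ card_erase_lt_of_mem hl) (notMem_erase l S) (notMem_erase k T) rfl
      rw [insert_erase hl, insert_erase hk] at hih
      linarith
    have hsum : (∑ k ∈ T, w i k * matchingSum w r c S (T.erase k)) *
          matchingSum w r c S (insert j T) ≤
        (∑ k ∈ T, w i k * matchingSum w r c S ((insert j T).erase k)) *
          matchingSum w r c S T := by
      simp only [sum_mul, mul_assoc]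
      refine sum_le_sum fun k hk => mul_le_mul_of_nonneg_left ?_ (hw i k)
      have hjk : j ≠ k := fun h => hj (h ▸ hk)
      rw [erase_insert_of_ne hjk, mul_comm]
      exact hsame k hk
    have hsq : 0 ≤ w i j * matchingSum w r c S T ^ 2 := mul_nonneg (hw i j) (sq_nonneg _)
    rw [matchingSum_insert_left hi, matchingSum_insert_left hi, sum_insert hj, erase_insert hj]
    linarith

lemma matchingSum_erase_mul_erase_le (hw : ∀ i j, 0 ≤ w i j) {S : Finset ι} {T : Finset κ}
    {i : ι} {j : κ} (hi : i ∈ S) (hj : j ∈ T) :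
    matchingSum w r c (S.erase i) T * matchingSum w r c S (T.erase j) ≤
      matchingSum w r c S T * matchingSum w r c (S.erase i) (T.erase j) := by
  simpa only [insert_erase hi, insert_erase hj] using
    matchingSum_insert_mul_insert_le (r := r) (c := c) hw (notMem_erase i S) (notMem_erase j T)

end Order

end Matching

section TwoVariable

open Filter Topology

lemma le_convexCombination_of_mul_div_rpow_le {D E K α : ℝ} (hD : 0 < D) (hE : 0 < E) (hα₀ : 0 ≤ α)
    (hα₁ : α ≤ 1) (h : K * (E / D) ^ α ≤ E) : K ≤ (1 - α) * E + α * D := by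
  have hK : K ≤ E ^ (1 - α) * D ^ α := by
    rw [Real.div_rpow hE.le hD.le, ← mul_div_assoc, div_le_iff₀ (by positivity)] at h
    rwa [Real.rpow_sub hE, Real.rpow_one, div_mul_eq_mul_div, le_div_iff₀ (by positivity)]
  exact hK.trans <| Real.geom_mean_le_arith_mean2_weighted (sub_nonneg.2 hα₁) hα₀ hE.le hD.le
    (by ring)

lemma one_sub_mul_le_of_pos {A B C D K α : ℝ} (hA : 0 < A) (hB : 0 < B) (hD : 0 < D)
    (hBC : B * C ≤ A * D) (hα₀ : 0 ≤ α) (hα₁ : α < 1)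
    (h : ∀ y z : ℝ, 0 < y → 0 < z →
      K * (y * z) ^ α ≤ A + α * y * B + α * z * C + α * y * (α * z) * D) :
    (1 - α) * K ≤ A + α * (1 - α) * D := by
  have hβ : 0 < 1 - α := sub_pos.2 hα₁
  set E := A / (1 - α) ^ 2 with hE
  -- For the extremal `C = A * D / B` the right-hand side of `h` factors as
  -- `A * (1 + α * y * B / A) * (1 + α * z * D / B)`, and the `y`, `z` below are optimal.
  have hC : C ≤ A * D / B := (le_div_iff₀' hB).2 hBC
  have hyz : A / ((1 - α) * B) * (B / ((1 - α) * D)) = E / D := by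
    rw [hE]; field_simp
  have hKE : K * (E / D) ^ α ≤ E := by
    rw [← hyz]
    calc _ ≤ _ := h (A / ((1 - α) * B)) (B / ((1 - α) * D)) (by positivity) (by positivity)
      _ ≤ A + α * (A / ((1 - α) * B)) * B + α * (B / ((1 - α) * D)) * (A * D / B) +
          α * (A / ((1 - α) * B)) * (α * (B / ((1 - α) * D))) * D := by gcongr
      _ = E := by rw [hE]; field_simp; ring
  have hK := le_convexCombination_of_mul_div_rpow_le hD (by positivity) hα₀ hα₁.le hKE
  calc (1 - α) * K ≤ (1 - α) * ((1 - α) * E + α * D) := by gcongr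
    _ = A + α * (1 - α) * D := by rw [hE]; field_simp

lemma one_sub_mul_le {A B C D K α : ℝ} (hA : 0 ≤ A) (hB : 0 ≤ B) (hC : 0 ≤ C) (hD : 0 ≤ D)
    (hBC : B * C ≤ A * D) (hα₀ : 0 ≤ α) (hα₁ : α < 1)
    (h : ∀ y z : ℝ, 0 < y → 0 < z →
      K * (y * z) ^ α ≤ A + α * y * B + α * z * C + α * y * (α * z) * D) :
    (1 - α) * K ≤ A + α * (1 - α) * D := by
  have hperturbed : ∀ ε : ℝ, 0 < ε → (1 - α) * K ≤ A + ε + α * (1 - α) * (D + ε) := by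
    intro ε hε
    have hδ : 0 < ε ^ 2 / (C + 1) := by positivity
    refine one_sub_mul_le_of_pos (B := B + ε ^ 2 / (C + 1)) (C := C) (by positivity)
      (by positivity) (by positivity) ?_ hα₀ hα₁ fun y z hy hz => (h y z hy hz).trans ?_
    · have hδC : ε ^ 2 / (C + 1) * C ≤ ε ^ 2 := by
        rw [div_mul_eq_mul_div, div_le_iff₀ (by positivity)]
        nlinarith [sq_nonneg ε]
      nlinarith [mul_nonneg hA hε.le, mul_nonneg hD hε.le]
    · gcongr <;> linarith
  have hlim : Tendsto (fun ε : ℝ => A + ε + α * (1 - α) * (D + ε)) (𝓝[>] 0)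
      (𝓝 (A + α * (1 - α) * D)) := by
    have hcont : Continuous fun ε : ℝ => A + ε + α * (1 - α) * (D + ε) := by fun_prop
    simpa using (hcont.tendsto 0).mono_left nhdsWithin_le_nhds
  exact ge_of_tendsto hlim (eventually_mem_nhdsWithin.mono hperturbed)

lemma le_of_forall_mul_le {A B C D K : ℝ}
    (h : ∀ y z : ℝ, 0 < y → 0 < z → K * (y * z) ≤ A + y * B + z * C + y * z * D) : K ≤ D := by
  have hlim : Tendsto (fun t : ℝ => A * t⁻¹ ^ 2 + (B + C) * t⁻¹ + D) atTop (𝓝 D) := by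
    have hinv := tendsto_inv_atTop_zero (𝕜 := ℝ)
    simpa using (((hinv.pow 2).const_mul A).add (hinv.const_mul (B + C))).add_const D
  refine ge_of_tendsto hlim ((eventually_gt_atTop 0).mono fun t ht => ?_)
  calc K = K * (t * t) * t⁻¹ ^ 2 := by field_simp
    _ ≤ (A + t * B + t * C + t * t * D) * t⁻¹ ^ 2 := by gcongr; exact h t t ht ht
    _ = A * t⁻¹ ^ 2 + (B + C) * t⁻¹ + D := by field_simp; ring

lemma mul_le_add_mul_mul {A B C D K α β : ℝ} (hA : 0 ≤ A) (hB : 0 ≤ B) (hC : 0 ≤ C) (hD : 0 ≤ D)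
    (hBC : B * C ≤ A * D) (hα₀ : 0 ≤ α) (hα₁ : α ≤ 1) (hβ₀ : 0 ≤ β) (hβ : α ≠ 1 → β = 1 - α)
    (h : ∀ y z : ℝ, 0 < y → 0 < z →
      K * (y * z) ^ α ≤ A + α * y * B + α * z * C + α * y * (α * z) * D) :
    β * K ≤ A + α * β * D := by
  rcases hα₁.eq_or_lt with rfl | hα₁
  · have hKD : K ≤ D := le_of_forall_mul_le fun y z hy hz => by simpa using h y z hy hz
    linarith [mul_le_mul_of_nonneg_left hKD hβ₀]
  · rw [hβ hα₁.ne]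
    exact one_sub_mul_le hA hB hC hD hBC hα₀ hα₁ h

end TwoVariable

section Schrijver

open Finset Matrix

lemma prod_rpow_le_prod_sum {α β : Type*} [Fintype α] [Fintype β] {x y : Matrix α β ℝ}
    (hx : ∀ i j, 0 ≤ x i j) (hrow : ∀ i, ∑ j, x i j = 1) (hy : ∀ i j, 0 ≤ y i j) :
    ∏ i, ∏ j, y i j ^ x i j ≤ ∏ i, ∑ j, x i j * y i j :=
  prod_le_prod (fun i _ => prod_nonneg fun j _ => Real.rpow_nonneg (hy i j) _) fun i _ =>
    Real.geom_mean_le_arith_mean_weighted _ _ _ (fun j _ => hx i j) (hrow i) fun j _ => hy i j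

lemma sum_filter_insert_eq_add_single {α β R : Type*} [DecidableEq α] [DecidableEq β]
    [AddCommMonoid R] {s : Finset α} {a : α} (ha : a ∉ s) (g : α → β) (f : α → R) :
    (fun b => ∑ d ∈ insert a s with g d = b, f d) =
      (fun b => ∑ d ∈ s with g d = b, f d) + Pi.single (g a) (f a) := by
  ext b
  rw [Pi.add_apply, Pi.single_apply, filter_insert]
  by_cases h : g a = b
  · rw [if_pos h, if_pos h.symm, sum_insert (by simp [ha]), add_comm]
  · rw [if_neg h, if_neg (Ne.symm h), add_zero]

variable {ι : Type*} [DecidableEq ι] {x v : Matrix ι ι ℝ} {y z : ι × ι → ℝ}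
  {F : Finset (ι × ι)}

/-- The weight matrix with entries `x i j * v i j` at the exposed edges `(i, j) ∈ F`, and `0`
elsewhere. -/
def exposedWeight (x v : Matrix ι ι ℝ) (F : Finset (ι × ι)) : Matrix ι ι ℝ :=
  of fun i j => if (i, j) ∈ F then x i j * v i j else 0

lemma exposedWeight_insert {e : ι × ι} (he : e ∉ F) :
    exposedWeight x v (insert e F) =
      exposedWeight x v F + single e.1 e.2 (x e.1 e.2 * v e.1 e.2) := by
  ext i j
  rw [exposedWeight, exposedWeight, Matrix.add_apply, of_apply, of_apply, single_apply]
  by_cases h : (i, j) = e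
  · subst h
    simp [he]
  · have hne : ¬(e.1 = i ∧ e.2 = j) := fun h' => h (Prod.ext h'.1.symm h'.2.symm)
    simp [h, hne]

variable [Fintype ι]

/-- The total weight `x e * y e` of the edges `e ∉ F` whose endpoint `g e` is a given vertex; `g` is
`Prod.fst` or `Prod.snd`, according to the side of the vertex. -/
def halfEdgeSum (g : ι × ι → ι) (x : Matrix ι ι ℝ) (y : ι × ι → ℝ) (F : Finset (ι × ι)) : ι → ℝ :=
  fun k => ∑ e ∈ Fᶜ with g e = k, x e.1 e.2 * y e

/-- The matching sum in which the edges `e ∈ F` are exposed, with weight `x e * v e`, while every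
other edge `e` is cut into two half-edges of weights `x e * y e` and `x e * z e`, each covering only
its own endpoint. -/
def exposedSum (x v : Matrix ι ι ℝ) (y z : ι × ι → ℝ) (F : Finset (ι × ι)) : ℝ :=
  matchingSum (exposedWeight x v F) (halfEdgeSum Prod.fst x y F) (halfEdgeSum Prod.snd x z F)
    univ univ

lemma halfEdgeSum_update {e : ι × ι} (he : e ∉ F) (g : ι × ι → ι) (s : ℝ) :
    halfEdgeSum g x (Function.update y e s) F =
      halfEdgeSum g x y (insert e F) + Pi.single (g e) (x e.1 e.2 * s) := by
  have hrest : halfEdgeSum g x (Function.update y e s) (insert e F) =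
      halfEdgeSum g x y (insert e F) := by
    ext k
    refine sum_congr rfl fun d hd => ?_
    have hde : d ≠ e := fun h => mem_compl.1 (mem_filter.1 hd).1 (h ▸ mem_insert_self e F)
    rw [Function.update_of_ne hde]
  rw [← hrest]
  unfold halfEdgeSum
  rw [← insert_compl_insert he, sum_filter_insert_eq_add_single (by simp), Function.update_self]

lemma exposedSum_insert {e : ι × ι} (he : e ∉ F) :
    exposedSum x v y z (insert e F) =
      matchingSum (exposedWeight x v F) (halfEdgeSum Prod.fst x y (insert e F))
          (halfEdgeSum Prod.snd x z (insert e F)) univ univ +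
        x e.1 e.2 * v e.1 e.2 *
          matchingSum (exposedWeight x v F) (halfEdgeSum Prod.fst x y (insert e F))
            (halfEdgeSum Prod.snd x z (insert e F)) (univ.erase e.1) (univ.erase e.2) := by
  rw [exposedSum, exposedWeight_insert he, matchingSum_add_single (mem_univ _) (mem_univ _)]

lemma exposedSum_update {e : ι × ι} (he : e ∉ F) (s t : ℝ) :
    exposedSum x v (Function.update y e s) (Function.update z e t) F =
      let Z := matchingSum (exposedWeight x v F) (halfEdgeSum Prod.fst x y (insert e F))
        (halfEdgeSum Prod.snd x z (insert e F))
      Z univ univ + x e.1 e.2 * s * Z (univ.erase e.1) univ +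
        x e.1 e.2 * t * Z univ (univ.erase e.2) +
        x e.1 e.2 * s * (x e.1 e.2 * t) * Z (univ.erase e.1) (univ.erase e.2) := by
  rw [exposedSum, halfEdgeSum_update he, halfEdgeSum_update he,
    matchingSum_add_single_left (mem_univ _), matchingSum_add_single_right (mem_univ _),
    matchingSum_add_single_right (mem_univ _)]
  ring

lemma exposedSum_univ (x v : Matrix ι ι ℝ) (y z : ι × ι → ℝ) :
    exposedSum x v y z univ = (x ⊙ v).permanent := by
  rw [← matchingSum_univ_zero_zero, exposedSum]
  exact matchingSum_congr (fun i _ j _ => by simp [exposedWeight])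
    (fun i _ => by simp [halfEdgeSum]) fun j _ => by simp [halfEdgeSum]

lemma exposedSum_empty (x v : Matrix ι ι ℝ) (y z : ι × ι → ℝ) :
    exposedSum x v y z ∅ =
      (∏ i, ∑ j, x i j * y (i, j)) * ∏ j, ∑ i, x i j * z (i, j) := by
  have hzero : exposedWeight x v ∅ = 0 := by
    ext
    simp [exposedWeight]
  rw [exposedSum, hzero, matchingSum_zero]
  simp [halfEdgeSum, sum_filter, Fintype.sum_prod_type]

lemma prod_rpow_le_exposedSum_empty (hx : x ∈ doublyStochastic ℝ ι)
    (v : Matrix ι ι ℝ) (hy : ∀ e, 0 < y e) (hz : ∀ e, 0 < z e) :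
    ∏ e : ι × ι, (y e * z e) ^ x e.1 e.2 ≤ exposedSum x v y z ∅ := by
  have hx₀ : ∀ i j, 0 ≤ x i j := fun _ _ => nonneg_of_mem_doublyStochastic hx
  have hrow := prod_rpow_le_prod_sum (y := of fun i j => y (i, j)) hx₀
    (sum_row_of_mem_doublyStochastic hx) fun i j => (hy (i, j)).le
  have hcol := prod_rpow_le_prod_sum (x := xᵀ) (y := of fun j i => z (i, j)) (fun i j => hx₀ j i)
    (sum_col_of_mem_doublyStochastic hx) fun j i => (hz (i, j)).le
  have hsplit : ∏ e : ι × ι, (y e * z e) ^ x e.1 e.2 =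
      (∏ i, ∏ j, y (i, j) ^ x i j) * ∏ j, ∏ i, z (i, j) ^ x i j := by
    rw [prod_comm (f := fun j i => z (i, j) ^ x i j)]
    simp only [Fintype.prod_prod_type, ← prod_mul_distrib, Real.mul_rpow (hy _).le (hz _).le]
  rw [hsplit, exposedSum_empty]
  exact mul_le_mul hrow hcol
    (prod_nonneg fun j _ => prod_nonneg fun i _ => Real.rpow_nonneg (hz (i, j)).le _)
    (prod_nonneg fun i _ => sum_nonneg fun j _ => mul_nonneg (hx₀ i j) (hy (i, j)).le)

lemma exposedSum_insert_le {e : ι × ι} {K : ℝ} (hx₀ : ∀ i j, 0 ≤ x i j)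
    (hx₁ : ∀ i j, x i j ≤ 1) (hv₀ : ∀ i j, 0 ≤ v i j) (hv : ∀ i j, x i j ≠ 1 → v i j = 1 - x i j)
    (hy : ∀ e, 0 < y e) (hz : ∀ e, 0 < z e) (he : e ∉ F)
    (h : ∀ s t : ℝ, 0 < s → 0 < t → K * (s * t) ^ x e.1 e.2 ≤
      exposedSum x v (Function.update y e s) (Function.update z e t) F) :
    v e.1 e.2 * K ≤ exposedSum x v y z (insert e F) := by
  have hw : ∀ i j, 0 ≤ exposedWeight x v F i j := fun i j => by
    rw [exposedWeight, of_apply]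
    split_ifs
    exacts [mul_nonneg (hx₀ i j) (hv₀ i j), le_rfl]
  have hhalf {f : ι × ι → ℝ} (hf : ∀ e, 0 < f e) (g : ι × ι → ι) (k : ι) :
      0 ≤ halfEdgeSum g x f (insert e F) k :=
    sum_nonneg fun d _ => mul_nonneg (hx₀ _ _) (hf d).le
  have hZ := matchingSum_nonneg hw (hhalf hy Prod.fst) (hhalf hz Prod.snd)
  rw [exposedSum_insert he]
  exact mul_le_add_mul_mul (hZ _ _) (hZ _ _) (hZ _ _) (hZ _ _)
    (matchingSum_erase_mul_erase_le hw (mem_univ _) (mem_univ _)) (hx₀ _ _) (hx₁ _ _) (hv₀ _ _)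
    (hv _ _) fun s t hs ht => exposedSum_update he s t ▸ h s t hs ht

lemma prod_mul_prod_rpow_le_exposedSum (hx : x ∈ doublyStochastic ℝ ι) (hv₀ : ∀ i j, 0 ≤ v i j)
    (hv : ∀ i j, x i j ≠ 1 → v i j = 1 - x i j) (F : Finset (ι × ι)) (hy : ∀ e, 0 < y e)
    (hz : ∀ e, 0 < z e) :
    (∏ e ∈ F, v e.1 e.2) * ∏ e ∈ Fᶜ, (y e * z e) ^ x e.1 e.2 ≤ exposedSum x v y z F := by
  induction F using Finset.induction_on generalizing y z with
  | empty => simpa using prod_rpow_le_exposedSum_empty hx v hy hz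
  | insert e F he ih =>
    rw [prod_insert he, mul_assoc]
    refine exposedSum_insert_le (fun _ _ => nonneg_of_mem_doublyStochastic hx)
      (fun _ _ => le_one_of_mem_doublyStochastic hx) hv₀ hv hy hz he fun s t hs ht => ?_
    have hpos {f : ι × ι → ℝ} (hf : ∀ e, 0 < f e) {u : ℝ} (hu : 0 < u) (d) :
        0 < Function.update f e u d := by
      rw [Function.update_apply]
      split_ifs
      exacts [hu, hf d]
    have hrest : ∏ d ∈ (insert e F)ᶜ,
        (Function.update y e s d * Function.update z e t d) ^ x d.1 d.2 =
          ∏ d ∈ (insert e F)ᶜ, (y d * z d) ^ x d.1 d.2 :=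
      prod_congr rfl fun d hd => by
        have hde : d ≠ e := fun h => mem_compl.1 hd (h ▸ mem_insert_self e F)
        rw [Function.update_of_ne hde, Function.update_of_ne hde]
    have hih := ih (hpos hy hs) (hpos hz ht)
    rw [← insert_compl_insert he, prod_insert (by simp), hrest, Function.update_self,
      Function.update_self] at hih
    linarith

/-- Schrijver's inequality is the case `v i j = 1 - x i j`. At the entries `x i j = 1` any
nonnegative `v i j` is admissible, because the row and the column of such an entry are otherwise
zero, so that it enters both sides as the same factor. -/
theorem prod_le_permanent_hadamard (hx : x ∈ doublyStochastic ℝ ι) (hv₀ : ∀ i j, 0 ≤ v i j)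
    (hv : ∀ i j, x i j ≠ 1 → v i j = 1 - x i j) : ∏ i, ∏ j, v i j ≤ (x ⊙ v).permanent := by
  have h := prod_mul_prod_rpow_le_exposedSum (y := 1) (z := 1) hx hv₀ hv univ (by simp) (by simp)
  simpa [exposedSum_univ, Fintype.prod_prod_type] using h

end Schrijver

section PermExtension

open Finset

variable {α β γ : Type*}

lemma exists_sumCongr_refl_eq [Finite α] [Finite β] {ρ : Equiv.Perm (α ⊕ β)}
    (h : ∀ b, ρ (.inr b) = .inr b) :
    ∃ τ : Equiv.Perm α, τ.sumCongr (Equiv.refl β) = ρ := by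
  have hinr : Set.MapsTo ρ (Set.range Sum.inr) (Set.range Sum.inr) := by
    rintro _ ⟨b, rfl⟩
    exact ⟨b, (h b).symm⟩
  obtain ⟨⟨τ, σ⟩, rfl⟩ := Equiv.Perm.mem_sumCongrHom_range_of_perm_mapsTo_inl
    ((Equiv.Perm.perm_mapsTo_inl_iff_mapsTo_inr ρ).2 hinr)
  have hσ : σ = Equiv.refl β := Equiv.ext fun b => Sum.inr_injective (h b)
  exact ⟨τ, by rw [hσ]; rfl⟩

variable [Fintype α] [DecidableEq α]

lemma sum_perm_apply_inr_eq {R : Type*} [Fintype β] [Fintype γ] [DecidableEq γ]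
    [AddCommMonoid R] (e f : α ⊕ β ≃ γ)
    (G : Equiv.Perm γ → R) :
    ∑ τ : Equiv.Perm γ with ∀ b, τ (e (.inr b)) = f (.inr b), G τ =
      ∑ τ : Equiv.Perm α, G (e.symm.trans ((τ.sumCongr (Equiv.refl β)).trans f)) := by
  classical
  symm
  refine sum_of_injOn (fun τ => e.symm.trans ((τ.sumCongr (Equiv.refl β)).trans f)) ?_ ?_ ?_ ?_
  · intro τ _ τ' _ h
    ext1 a
    simpa using DFunLike.congr_fun h (e (.inl a))
  · intro τ _
    simp
  · intro τ hτ hτ'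
    have hinr (b : β) : (e.trans (τ.trans f.symm)) (.inr b) = .inr b := by
      simp [(mem_filter.1 hτ).2 b]
    obtain ⟨τ', h⟩ := exists_sumCongr_refl_eq hinr
    refine absurd ⟨τ', mem_coe.2 (mem_univ τ'), ?_⟩ hτ'
    ext1 c
    simp [h]
  · intro τ _
    rfl

lemma card_perm_eqOn {K : Finset α} {g : α → α} (hg : Set.InjOn g K) :
    #{π : Equiv.Perm α | ∀ m ∈ K, π m = g m} = (Fintype.card α - #K).factorial := by
  obtain ⟨σ, hσ⟩ := Equiv.Perm.exists_extending_pair ((↑) : K → α) (fun m => g m)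
    Subtype.val_injective hg.injective
  have h := sum_perm_apply_inr_eq (R := ℕ)
    ((Equiv.sumComm _ _).trans (Equiv.sumCompl (· ∈ K)))
    (((Equiv.sumComm _ _).trans (Equiv.sumCompl (· ∈ K))).trans σ) 1
  simpa [hσ, Fintype.card_perm, Fintype.card_subtype_compl] using h

end PermExtension

section BlockCount

open Finset Matrix

variable {ι κ : Type*} [DecidableEq ι] [Fintype κ]

/-- The number of rows `(i, m)` that the permutation `τ` sends into the `j`-th block of columns. In
a lifted matrix this is the number of factors that `τ` takes from the block `(i, j)`. -/
def blockCount (τ : Equiv.Perm (ι × κ)) : Matrix ι ι ℕ :=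
  of fun i j => #{m | (τ (i, m)).1 = j}

lemma sum_perm_prod_filter_eq [DecidableEq κ] (τ : Equiv.Perm (ι × κ)) (i j : ι) (t : ℝ) :
    ∑ π : Equiv.Perm κ, ∏ m with (τ (i, m)).1 = j, t * (if π m = (τ (i, m)).2 then (1 : ℝ) else 0) =
      t ^ blockCount τ i j * (Fintype.card κ - blockCount τ i j).factorial := by
  have hinj : Set.InjOn (fun m => (τ (i, m)).2)
      ({m | (τ (i, m)).1 = j} : Finset κ) := fun m hm m' hm' h => by
    have hj := (mem_filter.1 hm).2.trans (mem_filter.1 hm').2.symm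
    exact (Prod.ext_iff.1 (τ.injective (Prod.ext hj h))).2
  rw [blockCount, of_apply, ← card_perm_eqOn hinj]
  simp [prod_ite_zero, ← sum_filter, mul_comm]

variable [Fintype ι]

lemma sum_row_blockCount (τ : Equiv.Perm (ι × κ)) (i : ι) :
    ∑ j, blockCount τ i j = Fintype.card κ :=
  (card_eq_sum_card_fiberwise fun _ _ => mem_coe.2 (mem_univ _)).symm

lemma sum_col_blockCount (τ : Equiv.Perm (ι × κ)) (j : ι) :
    ∑ i, blockCount τ i j = Fintype.card κ := by
  calc ∑ i, blockCount τ i j = ∑ p : ι × κ, if (τ p).1 = j then 1 else 0 := by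
        simp only [blockCount, of_apply, card_filter, Fintype.sum_prod_type]
    _ = ∑ p : ι × κ, if p.1 = j then 1 else 0 :=
        Equiv.sum_comp τ fun p => if p.1 = j then 1 else 0
    _ = Fintype.card κ := by
        rw [Fintype.sum_prod_type_right]
        simp

/-- The share of a single block in the averaged permanent, if the block has the entry `t` of `θ`,
size `N`, and `k` factors are taken from it: `(N - k)! / N!` is the probability that a random
permutation matrix of size `N` has ones in `k` given compatible positions. -/
def entryWeight (t : ℝ) (N k : ℕ) : ℝ :=
  t ^ k * ((N - k).factorial / N.factorial)

/-- The share in the averaged permanent of a permutation with block counts `k`. -/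
def blockWeight (θ : Matrix ι ι ℝ) (N : ℕ) (k : Matrix ι ι ℕ) : ℝ :=
  ∏ i, ∏ j, entryWeight (θ i j) N (k i j)

lemma prod_liftMat_apply {n N : ℕ} (θ : Matrix (Fin n) (Fin n) ℝ)
    (P : Fin n → Fin n → Equiv.Perm (Fin N)) (τ : Equiv.Perm (Fin n × Fin N)) :
    ∏ p, liftMat θ P p (τ p) = ∏ i, ∏ j, ∏ m with (τ (i, m)).1 = j,
      θ i j * (if P i j m = (τ (i, m)).2 then (1 : ℝ) else 0) := by
  rw [Fintype.prod_prod_type]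
  refine prod_congr rfl fun i _ => ?_
  rw [← prod_fiberwise univ fun m => (τ (i, m)).1]
  refine prod_congr rfl fun j _ => prod_congr rfl fun m hm => ?_
  rw [liftMat, of_apply, (mem_filter.1 hm).2]

lemma avgLiftPerm_eq_sum_blockWeight {n : ℕ} (N : ℕ) (θ : Matrix (Fin n) (Fin n) ℝ) :
    avgLiftPerm n N θ = ∑ τ : Equiv.Perm (Fin n × Fin N), blockWeight θ N (blockCount τ) := by
  have hcard : (Fintype.card (Fin n → Fin n → Equiv.Perm (Fin N)) : ℝ) =
      ∏ _i : Fin n, ∏ _j : Fin n, (N.factorial : ℝ) := by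
    simp [Fintype.card_perm]
  simp only [avgLiftPerm, perm']
  rw [hcard, sum_comm, sum_div]
  refine sum_congr rfl fun τ _ => ?_
  have hsum : ∑ P : Fin n → Fin n → Equiv.Perm (Fin N), ∏ p, liftMat θ P p (τ p) =
      ∏ i, ∏ j, θ i j ^ blockCount τ i j * ((N - blockCount τ i j).factorial : ℝ) := by
    simp only [prod_liftMat_apply]
    simpa [Fintype.prod_sum] using
      Fintype.prod_congr _ _ fun i => Fintype.prod_congr _ _ fun j =>
        sum_perm_prod_filter_eq τ i j (θ i j)
  rw [hsum]
  simp only [blockWeight, entryWeight, ← prod_div_distrib, mul_div_assoc]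

end BlockCount

section Comparison

open Finset Matrix

variable {ι : Type*} [Fintype ι]

/-- The ratio `entryWeight t (M + 1) k / entryWeight t M k`. It is `1 - k / (M + 1)` for `k ≤ M`,
whereas at `k = M + 1` the truncated subtraction turns it into the positive number `1 / (M + 1)`. -/
def weightRatio (M k : ℕ) : ℝ :=
  (M + 1 - k).factorial / ((M - k).factorial * (M + 1))

lemma weightRatio_nonneg (M k : ℕ) : 0 ≤ weightRatio M k := by
  unfold weightRatio
  positivity

lemma weightRatio_of_le {M k : ℕ} (hk : k ≤ M) : weightRatio M k = 1 - k / (M + 1) := by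
  obtain ⟨l, rfl⟩ := Nat.exists_eq_add_of_le hk
  rw [weightRatio, add_assoc, Nat.add_sub_cancel_left, Nat.add_sub_cancel_left, Nat.factorial_succ]
  push_cast
  field_simp
  ring

lemma entryWeight_succ (t : ℝ) (M k : ℕ) :
    entryWeight t (M + 1) k = weightRatio M k * entryWeight t M k := by
  rw [entryWeight, entryWeight, weightRatio, Nat.factorial_succ M]
  push_cast
  field_simp

lemma mul_weightRatio_mul_entryWeight (t : ℝ) (M k : ℕ) :
    k / (M + 1) * weightRatio M k * entryWeight t M k =
      k * (t / (M + 1) ^ 2) * entryWeight t M (k - 1) := by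
  cases k with
  | zero => simp
  | succ l =>
    rw [entryWeight, entryWeight, weightRatio, Nat.add_sub_add_right, Nat.add_sub_cancel, pow_succ]
    field_simp

lemma blockWeight_succ (θ : Matrix ι ι ℝ) (M : ℕ) (k : Matrix ι ι ℕ) :
    blockWeight θ (M + 1) k = (∏ i, ∏ j, weightRatio M (k i j)) * blockWeight θ M k := by
  simp only [blockWeight, entryWeight_succ, prod_mul_distrib]

lemma blockWeight_nonneg {θ : Matrix ι ι ℝ} (hθ : ∀ i j, 0 ≤ θ i j) (N : ℕ) (k : Matrix ι ι ℕ) :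
    0 ≤ blockWeight θ N k :=
  prod_nonneg fun i _ => prod_nonneg fun j _ => mul_nonneg (pow_nonneg (hθ i j) _) (by positivity)

variable [DecidableEq ι]

lemma prod_mul_weightRatio_mul_blockWeight (θ : Matrix ι ι ℝ) (M : ℕ) (k : Matrix ι ι ℕ)
    (σ : Equiv.Perm ι) :
    (∏ i, (k i (σ i) / (M + 1) * weightRatio M (k i (σ i)) : ℝ)) * blockWeight θ M k =
      (∏ i, k i (σ i) * (θ i (σ i) / (M + 1) ^ 2)) * blockWeight θ M (k - σ.permMatrix ℕ) := by
  rw [blockWeight, blockWeight, ← prod_mul_distrib, ← prod_mul_distrib]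
  refine prod_congr rfl fun i _ => ?_
  rw [← mul_prod_erase univ _ (mem_univ (σ i)),
    ← mul_prod_erase univ (fun j => entryWeight (θ i j) M ((k - σ.permMatrix ℕ) i j))
      (mem_univ (σ i)), ← mul_assoc, ← mul_assoc, mul_weightRatio_mul_entryWeight]
  congr 1
  · simp [PEquiv.toMatrix_apply]
  · refine prod_congr rfl fun j hj => ?_
    have hij : σ i ≠ j := (ne_of_mem_erase hj).symm
    simp [PEquiv.toMatrix_apply, hij]

lemma of_div_mem_doublyStochastic {M : ℕ} {k : Matrix ι ι ℕ}
    (hrow : ∀ i, ∑ j, k i j = M + 1) (hcol : ∀ j, ∑ i, k i j = M + 1) :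
    (of fun i j => (k i j / (M + 1) : ℝ)) ∈ doublyStochastic ℝ ι := by
  have hM : (M + 1 : ℝ) ≠ 0 := by positivity
  refine mem_doublyStochastic_iff_sum.2 ⟨fun i j => ?_, fun i => ?_, fun j => ?_⟩
  · rw [of_apply]
    positivity
  · simp only [of_apply, ← sum_div, ← Nat.cast_sum, hrow, Nat.cast_succ, div_self hM]
  · simp only [of_apply, ← sum_div, ← Nat.cast_sum, hcol, Nat.cast_succ, div_self hM]

lemma blockWeight_succ_le {M : ℕ} {θ : Matrix ι ι ℝ} (hθ : ∀ i j, 0 ≤ θ i j) {k : Matrix ι ι ℕ}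
    (hrow : ∀ i, ∑ j, k i j = M + 1) (hcol : ∀ j, ∑ i, k i j = M + 1) :
    blockWeight θ (M + 1) k ≤ ∑ σ : Equiv.Perm ι,
      (∏ i, k i (σ i) * (θ i (σ i) / (M + 1) ^ 2)) * blockWeight θ M (k - σ.permMatrix ℕ) := by
  have hratio : ∀ i j, (k i j / (M + 1) : ℝ) ≠ 1 → weightRatio M (k i j) = 1 - k i j / (M + 1) := by
    intro i j hij
    have hle : k i j ≤ M + 1 := hrow i ▸ single_le_sum_of_canonicallyOrdered (mem_univ j)
    have hne : k i j ≠ M + 1 := fun h => hij <| by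
      rw [h, Nat.cast_succ, div_self (by positivity)]
    exact weightRatio_of_le (by omega)
  have hschrijver := prod_le_permanent_hadamard (v := of fun i j => weightRatio M (k i j))
    (of_div_mem_doublyStochastic hrow hcol) (fun i j => weightRatio_nonneg M _) hratio
  calc blockWeight θ (M + 1) k
      = (∏ i, ∏ j, weightRatio M (k i j)) * blockWeight θ M k := blockWeight_succ θ M k
    _ ≤ _ := mul_le_mul_of_nonneg_right hschrijver (blockWeight_nonneg hθ M k)
    _ = _ := by
      rw [← permanent_transpose, permanent, sum_mul]
      exact sum_congr rfl fun σ _ => prod_mul_weightRatio_mul_blockWeight θ M k σ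

end Comparison

section Layer

open Finset Matrix

variable {ι : Type*}

/-- Inserting into block `i` of size `M` one new element, at position `a i`: the old element
`(i, m)` becomes `(i, (a i).succAbove m)`, and the new one is `(i, a i)`. -/
def layerEquiv {M : ℕ} (a : ι → Fin (M + 1)) : (ι × Fin M) ⊕ ι ≃ ι × Fin (M + 1) :=
  (Equiv.sumCongr (Equiv.refl _) (Equiv.prodPUnit ι).symm).trans <|
    (Equiv.prodSumDistrib ι (Fin M) PUnit.{1}).symm.trans <|
      Equiv.prodCongrRight fun i =>
        (Equiv.optionEquivSumPUnit (Fin M)).symm.trans (finSuccEquiv' (a i)).symm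

lemma layerEquiv_inl {M : ℕ} (a : ι → Fin (M + 1)) (p : ι × Fin M) :
    layerEquiv a (.inl p) = (p.1, (a p.1).succAbove p.2) := by
  simp [layerEquiv]

lemma layerEquiv_inr {M : ℕ} (a : ι → Fin (M + 1)) (i : ι) :
    layerEquiv a (.inr i) = (i, a i) := by
  simp [layerEquiv]

/-- The permutation that maps the layer `(i, a i)` to `(σ i, b i)` and acts as `τ` elsewhere. -/
def insertLayer {M : ℕ} (σ : Equiv.Perm ι) (a b : ι → Fin (M + 1))
    (τ : Equiv.Perm (ι × Fin M)) : Equiv.Perm (ι × Fin (M + 1)) :=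
  (layerEquiv a).symm.trans <| (τ.sumCongr (Equiv.refl ι)).trans <|
    ((Equiv.refl _).sumCongr σ).trans (layerEquiv (b ∘ σ.symm))

lemma blockCount_insertLayer [DecidableEq ι] {M : ℕ} (σ : Equiv.Perm ι) (a b : ι → Fin (M + 1))
    (τ : Equiv.Perm (ι × Fin M)) :
    blockCount (insertLayer σ a b τ) = blockCount τ + σ.permMatrix ℕ := by
  have hinr (i : ι) : insertLayer σ a b τ (i, a i) = (σ i, b i) := by
    rw [← layerEquiv_inr a, insertLayer, Equiv.trans_apply, Equiv.symm_apply_apply]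
    simp [layerEquiv_inr]
  have hinl (p : ι × Fin M) : (insertLayer σ a b τ (p.1, (a p.1).succAbove p.2)).1 = (τ p).1 := by
    rw [← layerEquiv_inl a, insertLayer, Equiv.trans_apply, Equiv.symm_apply_apply]
    simp [layerEquiv_inl]
  ext i j
  simp only [blockCount, of_apply, card_filter, Matrix.add_apply, PEquiv.toMatrix_apply,
    Fin.sum_univ_succAbove _ (a i), hinr, fun m => hinl (i, m), add_comm]
  simp

variable [Fintype ι] [DecidableEq ι]

lemma sum_perm_layer_eq {R : Type*} [AddCommMonoid R] {M : ℕ} (σ : Equiv.Perm ι)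
    (a b : ι → Fin (M + 1)) (H : Matrix ι ι ℕ → R) :
    ∑ τ : Equiv.Perm (ι × Fin (M + 1)) with ∀ i, τ (i, a i) = (σ i, b i), H (blockCount τ) =
      ∑ τ : Equiv.Perm (ι × Fin M), H (blockCount τ + σ.permMatrix ℕ) := by
  have h := sum_perm_apply_inr_eq (layerEquiv a)
    (((Equiv.refl _).sumCongr σ).trans (layerEquiv (b ∘ σ.symm))) fun τ => H (blockCount τ)
  simp only [← blockCount_insertLayer σ a b]
  simpa [layerEquiv_inr, insertLayer] using h

lemma prod_blockCount_eq_card {M : ℕ} (σ : Equiv.Perm ι) (τ : Equiv.Perm (ι × Fin M)) :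
    ∏ i, blockCount τ i (σ i) =
      #{p : ι → Fin M × Fin M | ∀ i, τ (i, (p i).1) = (σ i, (p i).2)} := by
  have hcard (i j : ι) : blockCount τ i j = #{q : Fin M × Fin M | τ (i, q.1) = (j, q.2)} := by
    rw [blockCount, of_apply]
    exact card_bij (fun m _ => (m, (τ (i, m)).2))
      (fun m hm => by simpa [Prod.ext_iff] using hm)
      (fun m _ m' _ h => (Prod.ext_iff.1 h).1)
      (fun q hq => by
        obtain ⟨h₁, h₂⟩ := Prod.ext_iff.1 (mem_filter.1 hq).2
        exact ⟨q.1, by simpa using h₁, Prod.ext rfl h₂⟩)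
  simp only [hcard, ← Fintype.card_piFinset]
  congr 1
  ext p
  simp

lemma sum_prod_blockCount_mul {M : ℕ} (σ : Equiv.Perm ι) (H : Matrix ι ι ℕ → ℝ) :
    ∑ τ : Equiv.Perm (ι × Fin (M + 1)), (∏ i, (blockCount τ i (σ i) : ℝ)) * H (blockCount τ) =
      ((M + 1) ^ 2) ^ Fintype.card ι *
        ∑ τ : Equiv.Perm (ι × Fin M), H (blockCount τ + σ.permMatrix ℕ) := by
  calc _ = ∑ τ : Equiv.Perm (ι × Fin (M + 1)), ∑ p : ι → Fin (M + 1) × Fin (M + 1),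
          if ∀ i, τ (i, (p i).1) = (σ i, (p i).2) then H (blockCount τ) else 0 := by
        simp only [← Nat.cast_prod, prod_blockCount_eq_card, ← nsmul_eq_mul, ← sum_const,
          sum_filter]
    _ = ∑ _p : ι → Fin (M + 1) × Fin (M + 1),
          ∑ τ : Equiv.Perm (ι × Fin M), H (blockCount τ + σ.permMatrix ℕ) := by
        rw [sum_comm]
        exact sum_congr rfl fun p _ => by
          rw [← sum_filter, sum_perm_layer_eq σ (fun i => (p i).1) fun i => (p i).2]
    _ = _ := by simp [pow_two]

lemma sum_prod_blockCount_mul_blockWeight_sub {M : ℕ} (θ : Matrix ι ι ℝ) (σ : Equiv.Perm ι) :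
    ∑ τ : Equiv.Perm (ι × Fin (M + 1)), (∏ i, blockCount τ i (σ i) * (θ i (σ i) / (M + 1) ^ 2)) *
        blockWeight θ M (blockCount τ - σ.permMatrix ℕ) =
      (∏ i, θ i (σ i)) * ∑ τ : Equiv.Perm (ι × Fin M), blockWeight θ M (blockCount τ) := by
  have hcancel (k : Matrix ι ι ℕ) : k + σ.permMatrix ℕ - σ.permMatrix ℕ = k :=
    Matrix.ext fun _ _ => Nat.add_sub_cancel _ _
  simp only [prod_mul_distrib, mul_assoc]
  rw [sum_prod_blockCount_mul σ fun k => (∏ i, θ i (σ i) / ((M : ℝ) + 1) ^ 2) *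
    blockWeight θ M (k - σ.permMatrix ℕ)]
  simp only [hcancel, ← mul_sum, prod_div_distrib, prod_const, card_univ]
  field_simp

end Layer

/-- For `n, M ≥ 1` and a nonnegative `n×n` matrix `θ` having a permutation
of positive weight: `perm(θ) · ⟨perm(θ↑P_M)⟩ ≥ ⟨perm(θ↑P_{M+1})⟩`, i.e. the `M₁ = 1` case of
the conjecture `(perm_{B,M₁}(θ))^{M₁}·(perm_{B,M₂}(θ))^{M₂} ≥ (perm_{B,M₁+M₂}(θ))^{M₁+M₂}`. -/
theorem statement_18 (n M : ℕ) (hn : 1 ≤ n) (hM : 1 ≤ M)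
    (θ : Matrix (Fin n) (Fin n) ℝ) (hθ : ∀ i j, 0 ≤ θ i j)
    (hex : ∃ σ : Equiv.Perm (Fin n), 0 < ∏ i, θ i (σ i)) :
    avgLiftPerm n (M + 1) θ ≤ perm' θ * avgLiftPerm n M θ := by
  rw [avgLiftPerm_eq_sum_blockWeight, avgLiftPerm_eq_sum_blockWeight, perm', Finset.sum_mul]
  refine (Finset.sum_le_sum fun τ _ => blockWeight_succ_le hθ ?_ ?_).trans_eq ?_
  · simpa using sum_row_blockCount τ
  · simpa using sum_col_blockCount τ
  · rw [Finset.sum_comm]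
    exact Finset.sum_congr rfl fun σ _ => sum_prod_blockCount_mul_blockWeight_sub θ σ
end
end
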